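/- Let n > 1 and let K, L ⊆ ℝⁿ be strictly convex bodies with cross covariogram g = g_{K,L} satisfying max_x g(x) < min{vol(K), vol(L)}. Then g attains its maximum at a unique point, and for every t with 0 < t ≤ max g, the superlevel set {x ∈ ℝⁿ : g(x) ≥ t} is strictly convex: for all distinct x, y in it and every s ∈ (0,1), g((1−s)x + sy) > t. -/

import Mathlib

open MeasureTheory Set Pointwise

open Filter Module Topology
open scoped ENNReal symmDiff

/-!
If `z = a x + b y` then `a (K ∩ (x + L)) + b (K ∩ (y + L)) ⊆ K ∩ (z + L)`, so by the
Brunn–Minkowski inequality `g z ≥ min (g x) (g y)`, and equality forces the inclusion to be an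
equality of sets. As `g z` is smaller than the volumes of `K` and `L`, neither `K` nor `z + L`
contains the other; in dimension at least two the boundary of `K` is connected, so it meets the
boundary of `z + L`. Such a common boundary point `a p + b q`, with `p ∈ K ∩ (x + L)` and
`q ∈ K ∩ (y + L)`, has `p = q` by strict convexity of `K` and `p - x = q - y` by that of `L`, hence
`x = y`. Thus `g` is strictly quasi-concave where it is positive, and its maximum, which exists by
continuity and compact support, is unique.
-/

/-! ### The Prékopa–Leindler inequality -/

theorem rpow_mul_rpow_self_of_add_eq_one {a b : ℝ} (ha : 0 ≤ a) (hb : 0 ≤ b) (hab : a + b = 1)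
    (t : ℝ≥0∞) : t ^ a * t ^ b = t := by
  rw [← ENNReal.rpow_add_of_nonneg a b ha hb, hab, ENNReal.rpow_one]

theorem rpow_mul_rpow_le_ofReal_mul_add {a b : ℝ} (ha : 0 < a) (hb : 0 < b) (hab : a + b = 1)
    (x y : ℝ≥0∞) : x ^ a * y ^ b ≤ ENNReal.ofReal a * x + ENNReal.ofReal b * y := by
  have hconj : (a⁻¹).HolderConjugate b⁻¹ :=
    Real.holderConjugate_iff.2 ⟨(one_lt_inv₀ ha).2 (by linarith), by simpa using hab⟩
  simpa [← ENNReal.rpow_mul, ha.ne', hb.ne', ENNReal.ofReal_inv_of_pos, ha, hb, div_eq_mul_inv,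
    mul_comm] using ENNReal.young_inequality (x ^ a) (y ^ b) hconj

theorem volume_add_volume_le_of_isCompact {A B : Set ℝ} (hA : IsCompact A) (hB : IsCompact B)
    (hA₀ : A.Nonempty) (hB₀ : B.Nonempty) : volume A + volume B ≤ volume (A + B) := by
  obtain ⟨M, hM, hAM⟩ := hA.exists_isGreatest hA₀
  obtain ⟨m, hm, hBm⟩ := hB.exists_isLeast hB₀
  have hdisj : AEDisjoint volume (m +ᵥ A) (M +ᵥ B) := by
    refine measure_mono_null (t := {M + m}) ?_ (by simp)
    rintro _ ⟨⟨p, hp, rfl⟩, q, hq, hpq⟩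
    have hpM := hAM hp
    have hmq := hBm hq
    simp only [vadd_eq_add, mem_singleton_iff] at hpq ⊢
    linarith
  have hsub : (m +ᵥ A) ∪ (M +ᵥ B) ⊆ A + B := by
    refine union_subset ?_ (vadd_set_subset_vadd hM)
    rw [add_comm A B]
    exact vadd_set_subset_vadd hm
  calc volume A + volume B
      = volume (m +ᵥ A) + volume (M +ᵥ B) := by simp
    _ = volume ((m +ᵥ A) ∪ (M +ᵥ B)) :=
      (measure_union₀ (hB.vadd M).measurableSet.nullMeasurableSet hdisj).symm
    _ ≤ volume (A + B) := measure_mono hsub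

theorem volume_add_volume_le_volume_add {A B : Set ℝ} (hA : MeasurableSet A)
    (hB : MeasurableSet B) (hA₀ : A.Nonempty) (hB₀ : B.Nonempty) :
    volume A + volume B ≤ volume (A + B) := by
  obtain ⟨p, hp⟩ := hA₀
  obtain ⟨q, hq⟩ := hB₀
  rw [hA.measure_eq_iSup_isCompact, hB.measure_eq_iSup_isCompact]
  simp only [iSup_and']
  refine ENNReal.biSup_add_biSup_le' ⟨∅, empty_subset _, isCompact_empty⟩
    ⟨∅, empty_subset _, isCompact_empty⟩ fun P hP Q hQ => ?_
  calc volume P + volume Q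
      ≤ volume (insert p P) + volume (insert q Q) := by gcongr <;> exact subset_insert _ _
    _ ≤ volume (insert p P + insert q Q) :=
      volume_add_volume_le_of_isCompact (hP.2.insert p) (hQ.2.insert q) (insert_nonempty _ _)
        (insert_nonempty _ _)
    _ ≤ volume (A + B) :=
      measure_mono (add_subset_add (insert_subset hp hP.1) (insert_subset hq hQ.1))

theorem lintegral_eq_lintegral_meas_ofReal_lt {α : Type*} [MeasurableSpace α] {μ : Measure α}
    {f : α → ℝ≥0∞} (hf : AEMeasurable f μ) (hf' : ∀ x, f x ≠ ∞) :
    ∫⁻ x, f x ∂μ = ∫⁻ t in Ioi (0 : ℝ), μ {x | ENNReal.ofReal t < f x} := by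
  calc ∫⁻ x, f x ∂μ = ∫⁻ x, ENNReal.ofReal (f x).toReal ∂μ := by
        simp only [ENNReal.ofReal_toReal (hf' _)]
    _ = ∫⁻ t in Ioi (0 : ℝ), μ {x | t < (f x).toReal} :=
      lintegral_eq_lintegral_meas_lt μ (.of_forall fun _ => ENNReal.toReal_nonneg)
        hf.ennreal_toReal
    _ = ∫⁻ t in Ioi (0 : ℝ), μ {x | ENNReal.ofReal t < f x} :=
      setLIntegral_congr_fun measurableSet_Ioi fun t ht => by
        simp only [ENNReal.ofReal_lt_iff_lt_toReal (le_of_lt ht) (hf' _)]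

theorem smul_superlevel_add_smul_superlevel_subset {E : Type*} [Add E] [SMul ℝ E] {a b : ℝ}
    (ha : 0 < a) (hb : 0 < b) (hab : a + b = 1) {f g h : E → ℝ≥0∞}
    (H : ∀ x y, f x ^ a * g y ^ b ≤ h (a • x + b • y)) (t : ℝ≥0∞) :
    a • {x | t < f x} + b • {x | t < g x} ⊆ {x | t < h x} := by
  rintro _ ⟨_, ⟨x, hx, rfl⟩, _, ⟨y, hy, rfl⟩, rfl⟩
  calc t = t ^ a * t ^ b := (rpow_mul_rpow_self_of_add_eq_one ha.le hb.le hab t).symm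
    _ < f x ^ a * g y ^ b :=
      ENNReal.mul_lt_mul (ENNReal.rpow_lt_rpow hx ha) (ENNReal.rpow_lt_rpow hy hb)
    _ ≤ h (a • x + b • y) := H x y

theorem ofReal_mul_volume_superlevel_add_le {a b : ℝ} (ha : 0 < a) (hb : 0 < b) (hab : a + b = 1)
    {f g h : ℝ → ℝ≥0∞} (hf : Measurable f) (hg : Measurable g)
    (H : ∀ x y, f x ^ a * g y ^ b ≤ h (a • x + b • y)) {t : ℝ≥0∞} (htf : t < ⨆ x, f x)
    (htg : t < ⨆ x, g x) :
    ENNReal.ofReal a * volume {x | t < f x} + ENNReal.ofReal b * volume {x | t < g x} ≤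
      volume {x | t < h x} := by
  have volume_smul {c : ℝ} (hc : 0 < c) (S : Set ℝ) :
      volume (c • S) = ENNReal.ofReal c * volume S := by
    simp [Measure.addHaar_smul, abs_of_pos hc]
  rw [← volume_smul ha, ← volume_smul hb]
  calc volume (a • {x | t < f x}) + volume (b • {x | t < g x})
      ≤ volume (a • {x | t < f x} + b • {x | t < g x}) :=
        volume_add_volume_le_volume_add ((measurableSet_lt measurable_const hf).const_smul₀ a)
          ((measurableSet_lt measurable_const hg).const_smul₀ b)
          (Set.Nonempty.smul_set (lt_iSup_iff.1 htf)) (Set.Nonempty.smul_set (lt_iSup_iff.1 htg))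
    _ ≤ volume {x | t < h x} :=
      measure_mono (smul_superlevel_add_smul_superlevel_subset ha hb hab H t)

theorem ofReal_mul_lintegral_add_le_of_iSup_eq_one {a b : ℝ} (ha : 0 < a) (hb : 0 < b)
    (hab : a + b = 1) {f g h : ℝ → ℝ≥0∞} (hf : Measurable f) (hg : Measurable g)
    (hh : Measurable h) (hf₁ : ⨆ x, f x = 1) (hg₁ : ⨆ x, g x = 1)
    (H : ∀ x y, f x ^ a * g y ^ b ≤ h (a • x + b • y)) :
    ENNReal.ofReal a * (∫⁻ x, f x) + ENNReal.ofReal b * (∫⁻ x, g x) ≤ ∫⁻ x, h x := by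
  have hf_le (x : ℝ) : f x ≤ 1 := hf₁ ▸ le_iSup f x
  have hg_le (x : ℝ) : g x ≤ 1 := hg₁ ▸ le_iSup g x
  have ne_top_of_le_one {k : ℝ → ℝ≥0∞} (hk : ∀ x, k x ≤ 1) (x : ℝ) : k x ≠ ∞ :=
    ne_top_of_le_ne_top ENNReal.one_ne_top (hk x)
  have H_min (x y : ℝ) : f x ^ a * g y ^ b ≤ min (h (a • x + b • y)) 1 :=
    le_min (H x y) <| mul_le_one' (ENNReal.rpow_le_one (hf_le x) ha.le)
      (ENNReal.rpow_le_one (hg_le y) hb.le)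
  calc ENNReal.ofReal a * (∫⁻ x, f x) + ENNReal.ofReal b * (∫⁻ x, g x)
      ≤ ∫⁻ t in Ioi (0 : ℝ), (ENNReal.ofReal a * volume {x | ENNReal.ofReal t < f x} +
          ENNReal.ofReal b * volume {x | ENNReal.ofReal t < g x}) := by
        rw [lintegral_eq_lintegral_meas_ofReal_lt hf.aemeasurable (ne_top_of_le_one hf_le),
          lintegral_eq_lintegral_meas_ofReal_lt hg.aemeasurable (ne_top_of_le_one hg_le),
          ← lintegral_const_mul' _ _ ENNReal.ofReal_ne_top,
          ← lintegral_const_mul' _ _ ENNReal.ofReal_ne_top]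
        exact le_lintegral_add _ _
    _ ≤ ∫⁻ t in Ioi (0 : ℝ), volume {x | ENNReal.ofReal t < min (h x) 1} := by
        refine lintegral_mono fun t => ?_
        rcases le_or_gt 1 (ENNReal.ofReal t) with ht | ht
        · simp [fun x => ((hf_le x).trans ht).not_gt, fun x => ((hg_le x).trans ht).not_gt]
        · exact ofReal_mul_volume_superlevel_add_le ha hb hab hf hg H_min (hf₁ ▸ ht) (hg₁ ▸ ht)
    _ = ∫⁻ x, min (h x) 1 := (lintegral_eq_lintegral_meas_ofReal_lt
        (hh.min measurable_const).aemeasurable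
        (ne_top_of_le_one fun x => min_le_right (h x) 1)).symm
    _ ≤ ∫⁻ x, h x := lintegral_mono fun x => min_le_left _ _

/-- The Prékopa–Leindler inequality for `μ` with weights `a` and `b`, a functional form of the
multiplicative Brunn–Minkowski inequality that, unlike the latter, passes to product measures. -/
def PrekopaLeindler {E : Type*} [Add E] [SMul ℝ E] [MeasurableSpace E] (a b : ℝ)
    (μ : Measure E) : Prop :=
  ∀ ⦃f g h : E → ℝ≥0∞⦄, Measurable f → Measurable g → Measurable h →
    (∀ x y, f x ^ a * g y ^ b ≤ h (a • x + b • y)) →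
      (∫⁻ x, f x ∂μ) ^ a * (∫⁻ x, g x ∂μ) ^ b ≤ ∫⁻ x, h x ∂μ

theorem lintegral_rpow_mul_lintegral_rpow_le_of_iSup_ne_top {a b : ℝ} (ha : 0 < a) (hb : 0 < b)
    (hab : a + b = 1) {f g h : ℝ → ℝ≥0∞} (hf : Measurable f) (hg : Measurable g)
    (hh : Measurable h) (hf_top : ⨆ x, f x ≠ ∞) (hg_top : ⨆ x, g x ≠ ∞)
    (H : ∀ x y, f x ^ a * g y ^ b ≤ h (a • x + b • y)) :
    (∫⁻ x, f x) ^ a * (∫⁻ x, g x) ^ b ≤ ∫⁻ x, h x := by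
  set α := ⨆ x, f x with hα
  set β := ⨆ x, g x with hβ
  rcases eq_or_ne α 0 with hα₀ | hα₀
  · have hf₀ : ∀ x, f x = 0 := by simpa [hα] using hα₀
    simp [hf₀, ha]
  rcases eq_or_ne β 0 with hβ₀ | hβ₀
  · have hg₀ : ∀ x, g x = 0 := by simpa [hβ] using hβ₀
    simp [hg₀, hb]
  set c := (α⁻¹) ^ a * (β⁻¹) ^ b
  have hc₀ : c ≠ 0 := by simp [c, hα₀, hβ₀, hf_top, hg_top]
  have hc_top : c ≠ ∞ := ENNReal.mul_ne_top (by simp [hα₀, hf_top]) (by simp [hβ₀, hg_top])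
  have rescale (x y : ℝ≥0∞) : (α⁻¹ * x) ^ a * (β⁻¹ * y) ^ b = c * (x ^ a * y ^ b) := by
    rw [ENNReal.mul_rpow_of_nonneg _ _ ha.le, ENNReal.mul_rpow_of_nonneg _ _ hb.le]
    ring
  have normalized : ENNReal.ofReal a * (∫⁻ x, α⁻¹ * f x) + ENNReal.ofReal b * (∫⁻ x, β⁻¹ * g x) ≤
      ∫⁻ x, c * h x :=
    ofReal_mul_lintegral_add_le_of_iSup_eq_one ha hb hab (hf.const_mul _) (hg.const_mul _)
      (hh.const_mul _) (by rw [← ENNReal.mul_iSup, ENNReal.inv_mul_cancel hα₀ hf_top])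
      (by rw [← ENNReal.mul_iSup, ENNReal.inv_mul_cancel hβ₀ hg_top])
      fun x y => by rw [rescale]; gcongr; exact H x y
  rw [← ENNReal.mul_le_mul_iff_right hc₀ hc_top]
  calc c * ((∫⁻ x, f x) ^ a * (∫⁻ x, g x) ^ b)
      = (∫⁻ x, α⁻¹ * f x) ^ a * (∫⁻ x, β⁻¹ * g x) ^ b := by
        rw [lintegral_const_mul _ hf, lintegral_const_mul _ hg, rescale]
    _ ≤ ∫⁻ x, c * h x := (rpow_mul_rpow_le_ofReal_mul_add ha hb hab _ _).trans normalized
    _ = c * ∫⁻ x, h x := lintegral_const_mul _ hh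

theorem tendsto_lintegral_min_natCast {α : Type*} [MeasurableSpace α] {μ : Measure α}
    {f : α → ℝ≥0∞} (hf : AEMeasurable f μ) :
    Tendsto (fun N : ℕ => ∫⁻ x, min (f x) N ∂μ) atTop (𝓝 (∫⁻ x, f x ∂μ)) := by
  refine lintegral_tendsto_of_tendsto_of_monotone (fun N => hf.min aemeasurable_const)
    (.of_forall fun x N M hNM => by dsimp only; gcongr) (.of_forall fun x => ?_)
  simpa using (tendsto_const_nhds (x := f x)).min ENNReal.tendsto_nat_nhds_top

theorem prekopaLeindler_volume_real {a b : ℝ} (ha : 0 < a) (hb : 0 < b) (hab : a + b = 1) :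
    PrekopaLeindler a b (volume : Measure ℝ) := by
  intro f g h hf hg hh H
  rcases eq_or_ne (∫⁻ x, f x) 0 with hf₀ | hf₀
  · simp [hf₀, ha]
  rcases eq_or_ne (∫⁻ x, g x) 0 with hg₀ | hg₀
  · simp [hg₀, hb]
  have htendsto : Tendsto (fun N : ℕ => (∫⁻ x, min (f x) N) ^ a * (∫⁻ x, min (g x) N) ^ b) atTop
      (𝓝 ((∫⁻ x, f x) ^ a * (∫⁻ x, g x) ^ b)) :=
    ENNReal.Tendsto.mul ((tendsto_lintegral_min_natCast hf.aemeasurable).ennrpow_const a)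
      (.inl (by simp [hf₀, ha.le]))
      ((tendsto_lintegral_min_natCast hg.aemeasurable).ennrpow_const b)
      (.inl (by simp [hg₀, hb.le]))
  refine le_of_tendsto' htendsto fun N => ?_
  have iSup_min_ne_top (k : ℝ → ℝ≥0∞) : ⨆ x, min (k x) N ≠ ∞ :=
    ne_top_of_le_ne_top (ENNReal.natCast_ne_top N) (iSup_le fun x => min_le_right _ _)
  refine lintegral_rpow_mul_lintegral_rpow_le_of_iSup_ne_top ha hb hab (hf.min measurable_const)
    (hg.min measurable_const) hh (iSup_min_ne_top f) (iSup_min_ne_top g) fun x y => ?_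
  calc min (f x) N ^ a * min (g y) N ^ b ≤ f x ^ a * g y ^ b := by
        gcongr <;> exact min_le_left _ _
    _ ≤ h (a • x + b • y) := H x y

namespace PrekopaLeindler

variable {E F : Type*} [MeasurableSpace E] [MeasurableSpace F] {a b : ℝ} {μ : Measure E}
  {ν : Measure F}

theorem dirac [AddCommMonoid E] [Module ℝ E] (hab : a + b = 1) (x : E) :
    PrekopaLeindler a b (Measure.dirac x) := by
  intro f g h hf hg hh H
  simpa [lintegral_dirac' x, hf, hg, hh, ← add_smul, hab] using H x x

theorem prod [SFinite ν] [Add E] [SMul ℝ E] [Add F] [SMul ℝ F] (hμ : PrekopaLeindler a b μ)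
    (hν : PrekopaLeindler a b ν) : PrekopaLeindler a b (μ.prod ν) := by
  intro f g h hf hg hh H
  rw [lintegral_prod _ hf.aemeasurable, lintegral_prod _ hg.aemeasurable,
    lintegral_prod _ hh.aemeasurable]
  refine hμ hf.lintegral_prod_right' hg.lintegral_prod_right' hh.lintegral_prod_right' fun u v => ?_
  exact hν (hf.comp measurable_prodMk_left) (hg.comp measurable_prodMk_left)
    (hh.comp measurable_prodMk_left) fun x y => H (u, x) (v, y)

theorem map [AddCommMonoid E] [Module ℝ E] [AddCommMonoid F] [Module ℝ F]
    (hμ : PrekopaLeindler a b μ) {φ : E →ₗ[ℝ] F} (hφ : Measurable φ) :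
    PrekopaLeindler a b (μ.map φ) := by
  intro f g h hf hg hh H
  rw [lintegral_map hf hφ, lintegral_map hg hφ, lintegral_map hh hφ]
  exact hμ (hf.comp hφ) (hg.comp hφ) (hh.comp hφ) fun x y => by simpa using H (φ x) (φ y)

theorem smul [Add E] [SMul ℝ E] (hμ : PrekopaLeindler a b μ) (ha : 0 ≤ a) (hb : 0 ≤ b)
    (hab : a + b = 1) (c : ℝ≥0∞) : PrekopaLeindler a b (c • μ) := by
  intro f g h hf hg hh H
  simp only [lintegral_smul_measure, smul_eq_mul]
  calc (c * ∫⁻ x, f x ∂μ) ^ a * (c * ∫⁻ x, g x ∂μ) ^ b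
      = c ^ a * c ^ b * ((∫⁻ x, f x ∂μ) ^ a * (∫⁻ x, g x ∂μ) ^ b) := by
        rw [ENNReal.mul_rpow_of_nonneg _ _ ha, ENNReal.mul_rpow_of_nonneg _ _ hb]
        ring
    _ ≤ c * ∫⁻ x, h x ∂μ := by
        rw [rpow_mul_rpow_self_of_add_eq_one ha hb hab]
        gcongr
        exact hμ hf hg hh H

theorem measure_rpow_mul_measure_rpow_le [Add E] [SMul ℝ E] (hμ : PrekopaLeindler a b μ)
    (ha : 0 < a) (hb : 0 < b) {A B : Set E} (hA : MeasurableSet A) (hB : MeasurableSet B) :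
    μ A ^ a * μ B ^ b ≤ μ (a • A + b • B) := by
  -- The Minkowski combination of measurable sets need not be measurable.
  set C := toMeasurable μ (a • A + b • B)
  have hC : MeasurableSet C := measurableSet_toMeasurable μ _
  have H (x y : E) : A.indicator (1 : E → ℝ≥0∞) x ^ a * B.indicator (1 : E → ℝ≥0∞) y ^ b ≤
      C.indicator 1 (a • x + b • y) := by
    by_cases hx : x ∈ A <;> by_cases hy : y ∈ B
    · have hxy : a • x + b • y ∈ C := subset_toMeasurable μ _
        (add_mem_add (smul_mem_smul_set hx) (smul_mem_smul_set hy))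
      simp [hx, hy, hxy]
    all_goals simp [hx, hy, ha, hb]
  simpa [lintegral_indicator_one, hA, hB, hC, C, measure_toMeasurable] using
    hμ (measurable_one.indicator hA) (measurable_one.indicator hB) (measurable_one.indicator hC) H

theorem of_continuousLinearEquiv [NormedAddCommGroup E] [NormedSpace ℝ E] [FiniteDimensional ℝ E]
    [BorelSpace E] [NormedAddCommGroup F] [NormedSpace ℝ F] [BorelSpace F] [ν.IsAddHaarMeasure]
    (hν : PrekopaLeindler a b ν) (ha : 0 ≤ a) (hb : 0 ≤ b) (hab : a + b = 1) (e : E ≃L[ℝ] F)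
    (μ : Measure E) [μ.IsAddHaarMeasure] : PrekopaLeindler a b μ := by
  have : (ν.map e.symm).IsAddHaarMeasure := e.symm.isAddHaarMeasure_map ν
  rw [Measure.isAddLeftInvariant_eq_smul μ (ν.map e.symm)]
  exact (hν.map (φ := (e.symm : F →ₗ[ℝ] E)) e.symm.continuous.measurable).smul ha hb hab _

end PrekopaLeindler

theorem prekopaLeindler_volume_pi {a b : ℝ} (ha : 0 < a) (hb : 0 < b) (hab : a + b = 1) (n : ℕ) :
    PrekopaLeindler a b (volume : Measure (Fin n → ℝ)) := by
  induction n with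
  | zero =>
    rw [Measure.volume_pi_eq_dirac]
    exact .dirac hab _
  | succ n ih =>
    have hprod : PrekopaLeindler a b ((volume : Measure ℝ).prod (volume : Measure (Fin n → ℝ))) :=
      (prekopaLeindler_volume_real ha hb hab).prod ih
    exact hprod.of_continuousLinearEquiv ha.le hb.le hab
      (Fin.consEquivL ℝ fun _ : Fin (n + 1) => ℝ).symm volume

section FiniteDimensional

variable {E : Type*} [NormedAddCommGroup E] [NormedSpace ℝ E] [FiniteDimensional ℝ E]
  [MeasurableSpace E] [BorelSpace E]

theorem prekopaLeindler_addHaar {a b : ℝ} (ha : 0 < a) (hb : 0 < b) (hab : a + b = 1)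
    (μ : Measure E) [μ.IsAddHaarMeasure] : PrekopaLeindler a b μ :=
  (prekopaLeindler_volume_pi ha hb hab (finrank ℝ E)).of_continuousLinearEquiv ha.le hb.le hab
    (ContinuousLinearEquiv.ofFinrankEq (by simp)) μ

theorem min_addHaar_le_addHaar_smul_add_smul {a b : ℝ} (ha : 0 < a) (hb : 0 < b) (hab : a + b = 1)
    (μ : Measure E) [μ.IsAddHaarMeasure] {A B : Set E} (hA : MeasurableSet A)
    (hB : MeasurableSet B) : min (μ A) (μ B) ≤ μ (a • A + b • B) := by
  calc min (μ A) (μ B) = min (μ A) (μ B) ^ a * min (μ A) (μ B) ^ b :=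
        (rpow_mul_rpow_self_of_add_eq_one ha.le hb.le hab _).symm
    _ ≤ μ A ^ a * μ B ^ b := by
        gcongr
        exacts [min_le_left _ _, min_le_right _ _]
    _ ≤ μ (a • A + b • B) :=
      (prekopaLeindler_addHaar ha hb hab μ).measure_rpow_mul_measure_rpow_le ha hb hA hB

end FiniteDimensional

/-! ### Boundaries of convex sets -/

theorem subset_of_isPreconnected_of_disjoint_frontier {X : Type*} [TopologicalSpace X]
    {s t : Set X} (hs : IsPreconnected s) (hst : (s ∩ t).Nonempty) (hd : Disjoint s (frontier t)) :
    s ⊆ t := by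
  have hs_closure {x : X} (hx : x ∈ s) (hxt : x ∈ closure t) : x ∈ interior t :=
    by_contra fun hxi => hd.notMem_of_mem_left hx ⟨hxt, hxi⟩
  obtain ⟨x, hxs, hxt⟩ := hst
  refine (hs.subset_left_of_subset_union isOpen_interior isClosed_closure.isOpen_compl
    (disjoint_compl_right.mono_left interior_subset_closure) (fun y hy => ?_)
    ⟨x, hxs, hs_closure hxs (subset_closure hxt)⟩).trans interior_subset
  exact or_iff_not_imp_right.2 fun hyt => hs_closure hy (not_not.1 hyt)

section NormedSpace

variable {E : Type*} [NormedAddCommGroup E] [NormedSpace ℝ E] {K M : Set E}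

theorem isPreconnected_frontier_of_convex (hE : 1 < Module.rank ℝ E) (hK : Convex ℝ K)
    (hKb : Bornology.IsBounded K) : IsPreconnected (frontier K) := by
  rcases (interior K).eq_empty_or_nonempty with hint | hint
  · simpa [frontier, hint] using hK.closure.isPreconnected
  · obtain ⟨φ, -, -, hφ⟩ :=
      exists_homeomorph_image_interior_closure_frontier_eq_unitBall hK hint hKb
    rw [← φ.isPreconnected_image, hφ]
    exact isPreconnected_sphere hE 0 1

theorem subset_of_frontier_subset_of_convex [Nontrivial E] (hK : IsCompact K) (hKc : Convex ℝ K)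
    (hM : IsClosed M) (hMc : Convex ℝ M) (h : frontier K ⊆ M) : K ⊆ M := by
  have hext : K.extremePoints ℝ ⊆ M := fun x hx =>
    h ⟨subset_closure hx.1, (disjoint_interior_extremePoints K).notMem_of_mem_right hx⟩
  rw [← closure_convexHull_extremePoints hK hKc]
  exact closure_minimal (convexHull_min hext hMc) hM

theorem subset_or_subset_of_disjoint_frontier (hE : 1 < Module.rank ℝ E) (hK : IsCompact K)
    (hKc : Convex ℝ K) (hM : IsClosed M) (hMc : Convex ℝ M) (hKM : (K ∩ M).Nonempty)
    (hd : Disjoint (frontier K) (frontier M)) : K ⊆ M ∨ M ⊆ K := by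
  have : Nontrivial E := rank_pos_iff_nontrivial.1 (zero_lt_one.trans hE)
  by_cases h : (frontier K ∩ M).Nonempty
  · exact .inl <| subset_of_frontier_subset_of_convex hK hKc hM hMc <|
      subset_of_isPreconnected_of_disjoint_frontier
        (isPreconnected_frontier_of_convex hE hKc hK.isBounded) h hd
  · exact .inr <| subset_of_isPreconnected_of_disjoint_frontier hMc.isPreconnected
      (inter_comm K M ▸ hKM) (disjoint_iff_inter_eq_empty.2 (not_nonempty_iff_eq_empty.1 h)).symm

theorem subset_of_ae_le_of_convex [MeasurableSpace E] {μ : Measure E} [μ.IsOpenPosMeasure]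
    (hK : Convex ℝ K) (hint : (interior K).Nonempty) (hM : IsClosed M) (h : K ≤ᵐ[μ] M) :
    K ⊆ M := by
  have hint_sub : interior K ⊆ M := by
    rw [← sdiff_eq_empty, ← (isOpen_interior.sdiff hM).measure_eq_zero_iff μ]
    exact measure_mono_null (sdiff_subset_sdiff_left interior_subset) (ae_le_set.1 h)
  calc K ⊆ closure (interior K) :=
        (hK.closure_interior_eq_closure_of_nonempty_interior hint).symm ▸ subset_closure
    _ ⊆ M := closure_minimal hint_sub hM

end NormedSpace

section FiniteDimensional

variable {E : Type*} [NormedAddCommGroup E] [NormedSpace ℝ E] [FiniteDimensional ℝ E]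
  [MeasurableSpace E] [BorelSpace E] {μ : Measure E} [μ.IsAddHaarMeasure]

theorem interior_nonempty_of_addHaar_ne_zero {C : Set E} (hC : Convex ℝ C) (h : μ C ≠ 0) :
    (interior C).Nonempty := by
  by_contra hint
  refine h (measure_mono_null subset_closure ?_)
  simpa [frontier, not_nonempty_iff_eq_empty.1 hint] using hC.addHaar_frontier μ

theorem subset_smul_add_smul_of_addHaar_le_min {a b : ℝ} (ha : 0 < a) (hb : 0 < b)
    (hab : a + b = 1) {A B C : Set E} (hA : IsCompact A) (hB : IsCompact B) (hC : Convex ℝ C)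
    (hsub : a • A + b • B ⊆ C) (hC₀ : μ C ≠ 0) (hle : μ C ≤ min (μ A) (μ B)) :
    C ⊆ a • A + b • B := by
  have hD : IsCompact (a • A + b • B) := (hA.smul a).add (hB.smul b)
  have hC_top : μ C ≠ ∞ := ne_top_of_le_ne_top hA.measure_ne_top (hle.trans (min_le_left _ _))
  have hae : a • A + b • B =ᵐ[μ] C := ae_eq_of_subset_of_measure_ge hsub
    (hle.trans (min_addHaar_le_addHaar_smul_add_smul ha hb hab μ hA.measurableSet hB.measurableSet))
    hD.measurableSet.nullMeasurableSet hC_top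
  exact subset_of_ae_le_of_convex hC (interior_nonempty_of_addHaar_ne_zero hC hC₀) hD.isClosed
    hae.symm.le

end FiniteDimensional

theorem smul_inter_vadd_add_smul_inter_vadd_subset {E : Type*} [AddCommGroup E] [Module ℝ E]
    {K L : Set E} (hK : Convex ℝ K) (hL : Convex ℝ L) {a b : ℝ} (ha : 0 ≤ a) (hb : 0 ≤ b)
    (hab : a + b = 1) (x y : E) :
    a • (K ∩ (x +ᵥ L)) + b • (K ∩ (y +ᵥ L)) ⊆ K ∩ ((a • x + b • y) +ᵥ L) := by
  rintro _ ⟨_, ⟨_, ⟨hpK, p, hp, rfl⟩, rfl⟩, _, ⟨_, ⟨hqK, q, hq, rfl⟩, rfl⟩, rfl⟩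
  refine ⟨hK hpK hqK ha hb hab, a • p + b • q, hL hp hq ha hb hab, ?_⟩
  simp only [vadd_eq_add]
  module

theorem eq_of_combo_notMem_interior {E : Type*} [AddCommGroup E] [Module ℝ E] [TopologicalSpace E]
    [ContinuousConstVAdd E E] {K L : Set E} (hK : StrictConvex ℝ K) (hL : StrictConvex ℝ L)
    {a b : ℝ} (ha : 0 < a) (hb : 0 < b) (hab : a + b = 1) {x y p q : E}
    (hp : p ∈ K ∩ (x +ᵥ L)) (hq : q ∈ K ∩ (y +ᵥ L)) (hcK : a • p + b • q ∉ interior K)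
    (hcL : a • p + b • q ∉ interior ((a • x + b • y) +ᵥ L)) : x = y := by
  obtain ⟨hpK, u, hu, rfl⟩ := hp
  obtain ⟨hqK, v, hv, rfl⟩ := hq
  have hpq : x + u = y + v := hK.eq hpK hqK ha hb hab hcK
  have huv : u = v := by
    refine hL.eq hu hv ha hb hab fun hmem => hcL ?_
    rw [interior_vadd]
    refine ⟨_, hmem, ?_⟩
    simp only [vadd_eq_add]
    module
  exact add_right_cancel (huv ▸ hpq)

/-! ### The cross covariogram -/

/-- The cross covariogram `x ↦ μ (K ∩ (L + x))` of `K` and `L`; the real-valued measure makes it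
`0` where the intersection has infinite measure. -/
def crossCovariogram {E : Type*} [Add E] [MeasurableSpace E] (μ : Measure E) (K L : Set E)
    (x : E) : ℝ :=
  μ.real (K ∩ (x +ᵥ L))

section Group

variable {G : Type*} [AddCommGroup G] [TopologicalSpace G] [IsTopologicalAddGroup G]
  [MeasurableSpace G] {μ : Measure G} {K L : Set G}

theorem continuous_crossCovariogram [BorelSpace G] [μ.IsAddLeftInvariant]
    [IsLocallyFiniteMeasure μ] [μ.InnerRegularCompactLTTop] (hK : NullMeasurableSet K μ)
    (hL : NullMeasurableSet L μ) (hL_top : μ L ≠ ∞) : Continuous (crossCovariogram μ K L) := by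
  let f : C(G, C(G, G)) := ContinuousMap.curry ⟨fun p => -p.1 + p.2, by fun_prop⟩
  have hf (x : G) : MeasurePreserving (f x) μ μ := measurePreserving_add_left μ (-x)
  have hpre (x : G) : f x ⁻¹' L = x +ᵥ L := by
    ext y
    simp [mem_vadd_set_iff_neg_vadd_mem, f]
  have hL_vadd (x : G) : NullMeasurableSet (x +ᵥ L) μ :=
    hpre x ▸ hL.preimage (hf x).quasiMeasurePreserving
  refine continuous_iff_continuousAt.2 fun x => tendsto_iff_dist_tendsto_zero.2 ?_
  have hlim : Tendsto (fun y => μ.real ((y +ᵥ L) ∆ (x +ᵥ L))) (𝓝 x) (𝓝 0) := by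
    have hmeasure := tendsto_measure_symmDiff_preimage_nhds_zero (f.continuous.tendsto x)
      (.of_forall hf) (hf x) hL hL_top
    simp only [hpre] at hmeasure
    exact (ENNReal.tendsto_toReal ENNReal.zero_ne_top).comp hmeasure
  refine squeeze_zero (fun _ => dist_nonneg) (fun y => ?_) hlim
  have hinter_top (y : G) : μ (K ∩ (y +ᵥ L)) ≠ ∞ :=
    measure_ne_top_of_subset inter_subset_right (by rwa [measure_vadd])
  calc dist (crossCovariogram μ K L y) (crossCovariogram μ K L x)
      ≤ μ.real ((K ∩ (y +ᵥ L)) ∆ (K ∩ (x +ᵥ L))) :=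
        abs_measureReal_sub_le_measureReal_symmDiff' (hK.inter (hL_vadd y)) (hK.inter (hL_vadd x))
          (hinter_top y) (hinter_top x)
    _ ≤ μ.real ((y +ᵥ L) ∆ (x +ᵥ L)) := by
        rw [← inter_symmDiff_distrib_left]
        refine measureReal_mono inter_subset_right
          (measure_ne_top_of_subset symmDiff_subset_union (measure_union_ne_top ?_ ?_)) <;>
        rwa [measure_vadd]

theorem crossCovariogram_pos [μ.IsOpenPosMeasure] (hK : μ K ≠ ∞) {k l : G} (hk : k ∈ interior K)
    (hl : l ∈ interior L) : 0 < crossCovariogram μ K L (k - l) := by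
  have hmem : k ∈ interior (K ∩ ((k - l) +ᵥ L)) := by
    rw [interior_inter, interior_vadd]
    exact ⟨hk, l, hl, by simp⟩
  exact ENNReal.toReal_pos (Measure.measure_pos_of_nonempty_interior μ ⟨k, hmem⟩).ne'
    (measure_ne_top_of_subset inter_subset_left hK)

theorem hasCompactSupport_crossCovariogram (hK : IsCompact K) (hL : IsCompact L) :
    HasCompactSupport (crossCovariogram μ K L) := by
  refine .intro (K := K - L) (by simpa [sub_eq_add_neg] using hK.add hL.neg) fun x hx => ?_
  have hempty : K ∩ (x +ᵥ L) = ∅ := by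
    refine eq_empty_of_forall_notMem ?_
    rintro _ ⟨hk, l, hl, rfl⟩
    exact hx ⟨_, hk, l, hl, by simp⟩
  simp [crossCovariogram, hempty]

end Group

theorem frontier_inter_frontier_vadd_nonempty {E : Type*} [NormedAddCommGroup E] [NormedSpace ℝ E]
    [MeasurableSpace E] [MeasurableConstVAdd E E] {μ : Measure E} [μ.IsAddLeftInvariant]
    {K L : Set E} (hE : 1 < Module.rank ℝ E) (hK : IsCompact K) (hKc : Convex ℝ K)
    (hL : IsClosed L) (hLc : Convex ℝ L) {z : E} (hne : (K ∩ (z +ᵥ L)).Nonempty)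
    (hzK : crossCovariogram μ K L z < μ.real K) (hzL : crossCovariogram μ K L z < μ.real L) :
    (frontier K ∩ frontier (z +ᵥ L)).Nonempty := by
  by_contra hfr
  rcases subset_or_subset_of_disjoint_frontier hE hK hKc (hL.vadd z) (hLc.vadd z) hne
    (disjoint_iff_inter_eq_empty.2 (not_nonempty_iff_eq_empty.1 hfr)) with hsub | hsub
  · rw [crossCovariogram, inter_eq_left.2 hsub] at hzK
    exact hzK.false
  · rw [crossCovariogram, inter_eq_right.2 hsub, measureReal_def, measure_vadd] at hzL
    exact hzL.false

section FiniteDimensional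

variable {E : Type*} [NormedAddCommGroup E] [NormedSpace ℝ E] [FiniteDimensional ℝ E]
  [MeasurableSpace E] [BorelSpace E] {μ : Measure E} [μ.IsAddHaarMeasure] {K L : Set E}

theorem exists_forall_crossCovariogram_le (hK : IsCompact K) (hL : IsCompact L) :
    ∃ m, ∀ x, crossCovariogram μ K L x ≤ crossCovariogram μ K L m :=
  (continuous_crossCovariogram hK.measurableSet.nullMeasurableSet
    hL.measurableSet.nullMeasurableSet hL.measure_ne_top).exists_forall_ge_of_hasCompactSupport
    (hasCompactSupport_crossCovariogram hK hL)

theorem min_crossCovariogram_lt_of_ne (hE : 1 < Module.rank ℝ E) (hK : IsCompact K)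
    (hKs : StrictConvex ℝ K) (hL : IsClosed L) (hLs : StrictConvex ℝ L) {a b : ℝ} (ha : 0 < a)
    (hb : 0 < b) (hab : a + b = 1) {x y : E} (hxy : x ≠ y) (hx : 0 < crossCovariogram μ K L x)
    (hy : 0 < crossCovariogram μ K L y)
    (hzK : crossCovariogram μ K L (a • x + b • y) < μ.real K)
    (hzL : crossCovariogram μ K L (a • x + b • y) < μ.real L) :
    min (crossCovariogram μ K L x) (crossCovariogram μ K L y) <
      crossCovariogram μ K L (a • x + b • y) := by
  set z := a • x + b • y
  have hcompact (w : E) : IsCompact (K ∩ (w +ᵥ L)) := hK.inter_right (hL.vadd w)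
  have hsub := smul_inter_vadd_add_smul_inter_vadd_subset hKs.convex hLs.convex ha.le hb.le hab x y
  have hz : 0 < μ (K ∩ (z +ᵥ L)) := by
    refine lt_of_lt_of_le (lt_min ?_ ?_) ((min_addHaar_le_addHaar_smul_add_smul ha hb hab μ
      (hcompact x).measurableSet (hcompact y).measurableSet).trans (measure_mono hsub))
    exacts [(ENNReal.toReal_pos_iff.1 hx).1, (ENNReal.toReal_pos_iff.1 hy).1]
  obtain ⟨c, hcK, hcL⟩ := frontier_inter_frontier_vadd_nonempty hE hK hKs.convex hL hLs.convex
    (nonempty_of_measure_ne_zero hz.ne') hzK hzL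
  by_contra! hle
  have hle_min : μ (K ∩ (z +ᵥ L)) ≤ min (μ (K ∩ (x +ᵥ L))) (μ (K ∩ (y +ᵥ L))) := by
    have toReal_le {w : E} (hw : crossCovariogram μ K L z ≤ crossCovariogram μ K L w) :
        μ (K ∩ (z +ᵥ L)) ≤ μ (K ∩ (w +ᵥ L)) :=
      (ENNReal.toReal_le_toReal (hcompact z).measure_ne_top (hcompact w).measure_ne_top).1 hw
    exact le_min (toReal_le (le_min_iff.1 hle).1) (toReal_le (le_min_iff.1 hle).2)
  have hcombo := subset_smul_add_smul_of_addHaar_le_min ha hb hab (hcompact x) (hcompact y)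
    (hKs.convex.inter (hLs.convex.vadd z)) hsub hz.ne' hle_min
  obtain ⟨_, ⟨p, hp, rfl⟩, _, ⟨q, hq, rfl⟩, rfl⟩ :=
    hcombo ⟨hK.isClosed.frontier_subset hcK, (hL.vadd z).frontier_subset hcL⟩
  exact hxy (eq_of_combo_notMem_interior hKs hLs ha hb hab hp hq hcK.2 hcL.2)

theorem covariogram_unique_max_and_strict_level_sets_general (hE : 1 < finrank ℝ E)
    (hK : IsCompact K) (hKs : StrictConvex ℝ K) (hL : IsCompact L) (hLs : StrictConvex ℝ L)
    (hmax : ∀ x, crossCovariogram μ K L x < min (μ.real K) (μ.real L)) :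
    (∃! x, ∀ y, crossCovariogram μ K L y ≤ crossCovariogram μ K L x) ∧
      ∀ t, 0 < t → ∀ x y, x ≠ y → t ≤ crossCovariogram μ K L x → t ≤ crossCovariogram μ K L y →
        ∀ s ∈ Ioo (0 : ℝ) 1, t < crossCovariogram μ K L ((1 - s) • x + s • y) := by
  have hlevel : ∀ t, 0 < t → ∀ x y, x ≠ y → t ≤ crossCovariogram μ K L x →
      t ≤ crossCovariogram μ K L y → ∀ s ∈ Ioo (0 : ℝ) 1,
        t < crossCovariogram μ K L ((1 - s) • x + s • y) := by
    intro t ht x y hxy hx hy s hs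
    have hz := lt_min_iff.1 (hmax ((1 - s) • x + s • y))
    exact (le_min hx hy).trans_lt <| min_crossCovariogram_lt_of_ne
      (lt_rank_of_lt_finrank hE) hK hKs hL.isClosed hLs (sub_pos.2 hs.2) hs.1 (sub_add_cancel 1 s)
      hxy (ht.trans_le hx) (ht.trans_le hy) hz.1 hz.2
  refine ⟨?_, hlevel⟩
  obtain ⟨m, hm⟩ := exists_forall_crossCovariogram_le (μ := μ) hK hL
  have hm_pos : 0 < crossCovariogram μ K L m := by
    have hmin := measureReal_nonneg.trans_lt (hmax 0)
    have interior_nonempty {C : Set E} (hC : StrictConvex ℝ C) (hpos : 0 < μ.real C) :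
        (interior C).Nonempty :=
      interior_nonempty_of_addHaar_ne_zero hC.convex (ENNReal.toReal_pos_iff.1 hpos).1.ne'
    obtain ⟨k, hk⟩ := interior_nonempty hKs (lt_min_iff.1 hmin).1
    obtain ⟨l, hl⟩ := interior_nonempty hLs (lt_min_iff.1 hmin).2
    exact (crossCovariogram_pos hK.measure_ne_top hk hl).trans_le (hm _)
  refine ⟨m, hm, fun y hy => by_contra fun hne => ?_⟩
  exact (hlevel _ hm_pos y m hne (hy m) le_rfl (1 / 2) (by norm_num)).not_ge (hm _)

end FiniteDimensional

/-- Consequence of Theorem 1.1: for strictly convex bodies with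
`max g < min {|K|, |L|}`, the cross covariogram attains its maximum at a unique point and
all its superlevel sets at positive heights are strictly convex. -/
theorem covariogram_unique_max_and_strict_level_sets
    (n : ℕ) (hn : 1 < n)
    (K L : Set (EuclideanSpace ℝ (Fin n)))
    (hKcomp : IsCompact K) (hKconv : Convex ℝ K) (hKint : (interior K).Nonempty)
    (hKstrict : StrictConvex ℝ K)
    (hLcomp : IsCompact L) (hLconv : Convex ℝ L) (hLint : (interior L).Nonempty)
    (hLstrict : StrictConvex ℝ L)
    (g : EuclideanSpace ℝ (Fin n) → ℝ)
    (hg : ∀ x, g x = (volume (K ∩ (x +ᵥ L))).toReal)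
    (hmax : ∀ x, g x < min (volume K).toReal (volume L).toReal) :
    (∃! x : EuclideanSpace ℝ (Fin n), ∀ y, g y ≤ g x) ∧
    (∀ t : ℝ, 0 < t → (∃ x, t ≤ g x) →
      ∀ x y : EuclideanSpace ℝ (Fin n), x ≠ y → t ≤ g x → t ≤ g y →
        ∀ s ∈ Ioo (0 : ℝ) 1, t < g ((1 - s) • x + s • y)) := by
  obtain rfl : g = crossCovariogram volume K L := funext hg
  exact (covariogram_unique_max_and_strict_level_sets_general (by simpa using hn) hKcomp hKstrict
    hLcomp hLstrict hmax).imp_right fun hlevel t ht _ => hlevel t ht
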